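/- arXiv:1010.1890 — 5 statements merged into one kernel-verified Lean document; each statement's English description precedes it below -/
import Mathlib

section
/- Let f be a polynomial in ℤ[x] and let m ≥ 1 be an integer. Then the sum over ℓ from 0 to m of (ℓ - 1)·D_ℓ(f)·D_{m-ℓ}(f^{m-1}) equals 0, where D_ℓ denotes the ℓ-th Hasse (divided-power) derivative. (Here the coefficient ℓ - 1 is taken in ℤ, so the ℓ = 0 term contributes -f·D_m(f^{m-1}) and the ℓ = 1 term contributes 0.) -/
open Polynomial

/-!
The Hasse derivatives of `f` are the coefficients of the Taylor expansion
`g(T) = f(x + T) = ∑ D_ℓ(f) T^ℓ`, which is multiplicative in `f`. So the sum in question is the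
coefficient of `T^m` in `(T g' - g) g^(m - 1)`. Multiplied by `m` this series becomes
`T (g^m)' - m g^m`, whose coefficient of `T^m` is zero because `T d/dT` multiplies the coefficient
of `T^k` by `k`. Over a torsion-free ring the factor `m` can be cancelled; every commutative
ring is a quotient of a torsion-free one, namely of a polynomial ring over `ℤ`.
-/

section PowerCoefficients

open Finset.HasAntidiagonal (antidiagonal)
open scoped PowerSeries

theorem coeff_X_mul_derivative {R : Type*} [CommSemiring R] (g : R⟦X⟧) (k : ℕ) :
    PowerSeries.coeff k (PowerSeries.X * d⁄dX R g) = k * PowerSeries.coeff k g := by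
  cases k with
  | zero => simp
  | succ k =>
    rw [PowerSeries.coeff_succ_X_mul, PowerSeries.coeff_derivative, Nat.cast_succ, mul_comm]

variable {R : Type*} [CommRing R]

/-- Euler's recurrence for the coefficients of a power, in division-free form. -/
theorem sum_antidiagonal_mul_coeff_mul_coeff_pow (g : R⟦X⟧) (n k : ℕ) :
    ∑ ij ∈ antidiagonal k,
      ((n + 1) * ij.1 - k : R) * PowerSeries.coeff ij.1 g * PowerSeries.coeff ij.2 (g ^ n) = 0 := by
  have leibniz : ((n + 1 : ℕ) • (PowerSeries.X * d⁄dX R g) - k • g) * g ^ n =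
      PowerSeries.X * d⁄dX R (g ^ (n + 1)) - k • g ^ (n + 1) := by
    rw [PowerSeries.derivative_pow, Nat.add_sub_cancel]
    simp only [nsmul_eq_mul]
    ring
  calc
    _ = PowerSeries.coeff k
        (((n + 1 : ℕ) • (PowerSeries.X * d⁄dX R g) - k • g) * g ^ n) := by
      rw [PowerSeries.coeff_mul]
      refine Finset.sum_congr rfl fun ij _ => ?_
      rw [map_sub, map_nsmul, map_nsmul, coeff_X_mul_derivative]
      simp only [nsmul_eq_mul]
      push_cast
      ring
    _ = 0 := by
      rw [leibniz, map_sub, map_nsmul, coeff_X_mul_derivative, nsmul_eq_mul, sub_self]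

theorem sum_antidiagonal_sub_one_mul_coeff_mul_coeff_pow_of_torsionFree [IsAddTorsionFree R]
    (g : R⟦X⟧) (n : ℕ) :
    ∑ ij ∈ antidiagonal (n + 1),
      (ij.1 - 1 : R) * PowerSeries.coeff ij.1 g * PowerSeries.coeff ij.2 (g ^ n) = 0 := by
  refine (nsmul_eq_zero_iff_right n.succ_ne_zero).mp ?_
  rw [← sum_antidiagonal_mul_coeff_mul_coeff_pow g n (n + 1), Finset.smul_sum]
  refine Finset.sum_congr rfl fun ij _ => ?_
  rw [nsmul_eq_mul]
  push_cast
  ring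

theorem sum_antidiagonal_sub_one_mul_coeff_mul_coeff_pow (g : R⟦X⟧) (n : ℕ) :
    ∑ ij ∈ antidiagonal (n + 1),
      (ij.1 - 1 : R) * PowerSeries.coeff ij.1 g * PowerSeries.coeff ij.2 (g ^ n) = 0 := by
  let φ : MvPolynomial R ℤ →+* R := (MvPolynomial.aeval id).toRingHom
  have φ_surjective : Function.Surjective φ :=
    fun r => ⟨MvPolynomial.X r, MvPolynomial.aeval_X id r⟩
  obtain ⟨G, rfl⟩ := PowerSeries.map_surjective φ φ_surjective g
  simpa only [map_sum, map_mul, map_sub, map_natCast, map_one, map_zero, ← map_pow,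
    PowerSeries.coeff_map]
    using congrArg φ (sum_antidiagonal_sub_one_mul_coeff_mul_coeff_pow_of_torsionFree G n)

end PowerCoefficients

section HasseSeries

open scoped PowerSeries

/-- The Taylor expansion `f(x + T) = ∑ D_ℓ(f) T^ℓ`, as a ring homomorphism from `R[x]` to power
series in `T` over `R[x]`. Unlike `Polynomial.taylor`, it expands at the generic point `x` rather
than at an element of `R`. -/
noncomputable def hasseSeries (R : Type*) [CommSemiring R] : R[X] →+* R[X]⟦X⟧ where
  toFun f := PowerSeries.mk fun ℓ => hasseDeriv ℓ f
  map_zero' := by ext1; simp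
  map_add' f g := by ext1; simp
  map_one' := by
    ext1 ℓ
    rcases ℓ.eq_zero_or_pos with rfl | hℓ
    · simp
    · rw [PowerSeries.coeff_mk, hasseDeriv_apply_one ℓ hℓ, PowerSeries.coeff_one, if_neg hℓ.ne']
  map_mul' f g := by
    ext1 ℓ
    simp only [PowerSeries.coeff_mul, PowerSeries.coeff_mk, hasseDeriv_mul]

theorem coeff_hasseSeries {R : Type*} [CommSemiring R] (f : R[X]) (ℓ : ℕ) :
    PowerSeries.coeff ℓ (hasseSeries R f) = hasseDeriv ℓ f :=
  PowerSeries.coeff_mk ℓ fun ℓ => hasseDeriv ℓ f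

theorem key_identity_int_general {R : Type*} [CommRing R] (f : R[X]) (m : ℕ) (hm : 1 ≤ m) :
    ∑ ℓ ∈ Finset.range (m + 1),
      C ((ℓ : R) - 1) * hasseDeriv ℓ f * hasseDeriv (m - ℓ) (f ^ (m - 1)) = 0 := by
  obtain ⟨n, rfl⟩ := Nat.exists_eq_add_of_le' hm
  have series_identity := sum_antidiagonal_sub_one_mul_coeff_mul_coeff_pow (hasseSeries R f) n
  simp only [← map_pow, coeff_hasseSeries] at series_identity
  rw [Finset.Nat.sum_antidiagonal_eq_sum_range_succ_mk] at series_identity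
  simpa only [map_sub, map_natCast, map_one, Nat.add_sub_cancel] using series_identity

end HasseSeries

/-- For `f ∈ ℤ[x]` and `m ≥ 1`,
`∑_{ℓ=0}^{m} (ℓ - 1) · D_ℓ(f) · D_{m-ℓ}(f^{m-1}) = 0`,
where `D_ℓ` is the `ℓ`-th Hasse derivative. -/
theorem key_identity_int (f : Polynomial ℤ) (m : ℕ) (hm : 1 ≤ m) :
    ∑ ℓ ∈ Finset.range (m + 1),
      C ((ℓ : ℤ) - 1) * hasseDeriv ℓ f * hasseDeriv (m - ℓ) (f ^ (m - 1)) = 0 :=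
  key_identity_int_general f m hm
end

section
/- Let A be a commutative ring of prime characteristic p, let f be a polynomial in A[x], and let m ≥ 1 be an integer. Then the sum over ℓ from 0 to m of (ℓ - 1)·D_ℓ(f)·D_{m-ℓ}(f^{m-1}) equals 0, where D_ℓ denotes the ℓ-th Hasse (divided-power) derivative and the coefficient ℓ - 1 is interpreted via the natural map ℤ → A. -/
open Polynomial

/-!
Comparing `D_n ∘ d/dx = (n + 1) D_{n+1}` with the Leibniz rule, `∑ ℓ · D_ℓ(f) · D_{m-ℓ}(g)` equals
`D_{m-1}(f' g)`, so for `g = f^{m-1}` the claim becomes `D_{m-1}(f' f^{m-1}) = D_m(f^m)`. Both sides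
agree after multiplication by `m`, since `m f' f^{m-1} = (f^m)'`. Dividing by `m` is legitimate over
a polynomial ring with coefficients in `ℕ`, and every commutative semiring is a quotient of one.
-/

open Finset.HasAntidiagonal (antidiagonal)

section Semiring

variable {R S : Type*} [Semiring R] [Semiring S]

theorem hasseDeriv_map (φ : R →+* S) (k : ℕ) (f : R[X]) :
    hasseDeriv k (f.map φ) = (hasseDeriv k f).map φ := by
  ext i
  simp [hasseDeriv_coeff]

theorem hasseDeriv_derivative (n : ℕ) (f : R[X]) :
    hasseDeriv n (derivative f) = (n + 1) • hasseDeriv (n + 1) f := by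
  simpa [add_mul] using LinearMap.congr_fun (hasseDeriv_comp n 1) f

theorem hasseDeriv_derivative_mul (n : ℕ) (f g : R[X]) :
    hasseDeriv n (derivative f * g) =
      ∑ ij ∈ antidiagonal (n + 1), ij.1 • (hasseDeriv ij.1 f * hasseDeriv ij.2 g) := by
  simp only [hasseDeriv_mul, hasseDeriv_derivative, Finset.Nat.sum_antidiagonal_succ, zero_smul,
    zero_add, smul_mul_assoc]

end Semiring

section CommSemiring

variable {R : Type*} [CommSemiring R]

theorem succ_nsmul_hasseDeriv_succ_pow_succ (n : ℕ) (f : R[X]) :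
    (n + 1) • hasseDeriv (n + 1) (f ^ (n + 1)) =
      (n + 1) • hasseDeriv n (derivative f * f ^ n) := by
  have h : derivative (f ^ (n + 1)) = (n + 1) • (derivative f * f ^ n) := by
    simp only [derivative_pow_succ, map_add, map_natCast, map_one, nsmul_eq_mul, Nat.cast_succ]
    ring
  rw [← hasseDeriv_derivative, h, map_nsmul]

theorem hasseDeriv_succ_pow_succ_of_isAddTorsionFree [IsAddTorsionFree R] (n : ℕ) (f : R[X]) :
    hasseDeriv (n + 1) (f ^ (n + 1)) = hasseDeriv n (derivative f * f ^ n) := by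
  ext i
  apply nsmul_right_injective n.succ_ne_zero
  simpa only [coeff_smul] using congrArg (coeff · i) (succ_nsmul_hasseDeriv_succ_pow_succ n f)

theorem hasseDeriv_succ_pow_succ (n : ℕ) (f : R[X]) :
    hasseDeriv (n + 1) (f ^ (n + 1)) = hasseDeriv n (derivative f * f ^ n) := by
  obtain ⟨F, rfl⟩ := map_surjective _ (MvPolynomial.counitNat_surjective R) f
  simp only [derivative_map, ← Polynomial.map_pow, ← Polynomial.map_mul, hasseDeriv_map,
    hasseDeriv_succ_pow_succ_of_isAddTorsionFree]

end CommSemiring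

theorem key_identity_charP_general {A : Type*} [CommRing A] (f : A[X]) (m : ℕ) (hm : 1 ≤ m) :
    ∑ ℓ ∈ Finset.range (m + 1),
      C ((((ℓ : ℤ) - 1) : ℤ) : A) * hasseDeriv ℓ f * hasseDeriv (m - ℓ) (f ^ (m - 1)) = 0 := by
  obtain ⟨n, rfl⟩ := Nat.exists_eq_add_of_le' hm
  calc
    _ = ∑ ij ∈ antidiagonal (n + 1), (ij.1 • (hasseDeriv ij.1 f * hasseDeriv ij.2 (f ^ n)) -
          hasseDeriv ij.1 f * hasseDeriv ij.2 (f ^ n)) := by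
      simp [Finset.Nat.sum_antidiagonal_eq_sum_range_succ_mk, sub_mul, mul_assoc]
    _ = hasseDeriv n (derivative f * f ^ n) - hasseDeriv (n + 1) (f * f ^ n) := by
      rw [Finset.sum_sub_distrib, ← hasseDeriv_derivative_mul, ← hasseDeriv_mul]
    _ = 0 := by rw [← pow_succ', hasseDeriv_succ_pow_succ, sub_self]

/-- For a commutative ring `A` of prime characteristic `p`, `f ∈ A[x]` and `m ≥ 1`,
`∑_{ℓ=0}^{m} (ℓ - 1) · D_ℓ(f) · D_{m-ℓ}(f^{m-1}) = 0`,
where `D_ℓ` is the `ℓ`-th Hasse derivative and `ℓ - 1` is taken via `ℤ → A`. -/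
theorem key_identity_charP (A : Type*) [CommRing A] (p : ℕ) [Fact p.Prime] [CharP A p]
    (f : Polynomial A) (m : ℕ) (hm : 1 ≤ m) :
    ∑ ℓ ∈ Finset.range (m + 1),
      C ((((ℓ : ℤ) - 1) : ℤ) : A) * hasseDeriv ℓ f * hasseDeriv (m - ℓ) (f ^ (m - 1)) = 0 :=
  key_identity_charP_general f m hm
end

section
/- Let A be a commutative ring of prime characteristic p, let e ≥ 1 be an integer, and let t be an integer with 0 ≤ t < p^e. Then for all f, g ∈ A[x], the t-th Hasse derivative satisfies D_t(g^{p^e}·f) = g^{p^e}·D_t(f); that is, D_t is linear over the subring of p^e-th powers of A[x]. -/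
/-!
In characteristic `p`, with `q = p ^ e`, the polynomial `g ^ q` is a polynomial in `X ^ q`. If
`q ∣ n` but `q ∤ k`, then `p ∣ n.choose k`, so every Hasse derivative of `g ^ q` whose order is not
a multiple of `q` vanishes. For `t < q`, only the term `g ^ q * D_t f` of the Leibniz rule survives.
-/

open Polynomial

theorem prime_dvd_choose_of_pow_dvd_of_not_pow_dvd {p e n k : ℕ} (hp : p.Prime) (hn : p ^ e ∣ n)
    (hk : ¬p ^ e ∣ k) : p ∣ n.choose k := by
  by_contra h
  have hchoose : emultiplicity p (n.choose k) = 0 := emultiplicity_eq_zero.2 h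
  have hle : emultiplicity p n ≤ emultiplicity p k := by
    simpa only [hchoose, zero_add] using hp.emultiplicity_le_emultiplicity_choose_add n k
  exact hk (pow_dvd_of_le_emultiplicity ((le_emultiplicity_of_pow_dvd hn).trans hle))

theorem hasseDeriv_mul_eq_mul_hasseDeriv {R : Type*} [Semiring R] {k : ℕ} {f : R[X]}
    (hf : ∀ i, 0 < i → i ≤ k → hasseDeriv i f = 0) (g : R[X]) :
    hasseDeriv k (f * g) = f * hasseDeriv k g := by
  rw [hasseDeriv_mul, Finset.Nat.sum_antidiagonal_eq_sum_range_succ_mk,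
    Finset.sum_eq_single_of_mem 0 (by simp)]
  · simp
  · intro i hi hi0
    rw [hf i (Nat.pos_of_ne_zero hi0) (Finset.mem_range_succ_iff.1 hi), zero_mul]

section CharP

variable {R : Type*} [CommSemiring R] {p e k : ℕ} [Fact p.Prime] [CharP R p]

theorem hasseDeriv_expand_prime_pow_eq_zero (hk : ¬p ^ e ∣ k) (f : R[X]) :
    hasseDeriv k (expand R (p ^ e) f) = 0 := by
  have hp : p.Prime := Fact.out
  ext n
  rw [hasseDeriv_coeff, coeff_expand (pow_pos hp.pos e), coeff_zero]
  split_ifs with hn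
  · rw [(CharP.cast_eq_zero_iff R p _).2 (prime_dvd_choose_of_pow_dvd_of_not_pow_dvd hp hn hk),
      zero_mul]
  · rw [mul_zero]

theorem hasseDeriv_pow_prime_pow_eq_zero (hk : ¬p ^ e ∣ k) (f : R[X]) :
    hasseDeriv k (f ^ p ^ e) = 0 := by
  rw [← map_iterateFrobenius_expand p f e, map_expand]
  exact hasseDeriv_expand_prime_pow_eq_zero hk _

end CharP

/-- For a commutative ring `A` of prime characteristic `p`, `e ≥ 1` and `0 ≤ t < p^e`, the
`t`-th Hasse derivative is linear over `p^e`-th powers: `D_t(g^{p^e}·f) = g^{p^e}·D_t(f)`. -/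
theorem hasseDeriv_pow_mul (A : Type*) [CommRing A] (p : ℕ) [Fact p.Prime] [CharP A p]
    (e : ℕ) (he : 1 ≤ e) (t : ℕ) (ht : t < p ^ e) :
    ∀ f g : Polynomial A,
      hasseDeriv t (g ^ (p ^ e) * f) = g ^ (p ^ e) * hasseDeriv t f := by
  intro f g
  refine hasseDeriv_mul_eq_mul_hasseDeriv (fun i hi0 hit ↦ ?_) f
  exact hasseDeriv_pow_prime_pow_eq_zero (Nat.not_dvd_of_pos_of_lt hi0 (hit.trans_lt ht)) g
end

section
/- Let k be a field of prime characteristic p, let n ≥ 0 and e ≥ 1 be integers, let R = k[x_1, …, x_n] be the polynomial ring, let J be an ideal of R, and let g ∈ R. If g^{p^e} belongs to J^{[p^e]}, the ideal generated by the p^e-th powers of all elements of J, then g ∈ J. -/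
/-!
A polynomial ring `R` over a field is Frobenius split: there is an additive `φ : R → R` with
`φ 1 = 1` and `φ (a ^ p * b) = a * φ b`. Such a `φ` is obtained by choosing a linear retraction of
the Frobenius of the field, applying it to all coefficients, and then keeping only the exponents
divisible by `p`. The `e`-fold iterate of `φ` sends `J^{[p^e]}` into `J` and `g ^ p ^ e` to `g`.
-/

/-- The ring homomorphism `f : R →+* S` splits as a homomorphism of `R`-modules. The retraction `φ`
is encoded as an additive map that is `R`-linear for the module structure on `S` induced by `f`, so
that no `Algebra` instance is needed when `R` and `S` are the same ring. -/
def IsSplitRingHom {R S : Type*} [CommSemiring R] [CommSemiring S] (f : R →+* S) : Prop :=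
  ∃ φ : S →+ R, φ 1 = 1 ∧ ∀ r s, φ (f r * s) = r * φ s

namespace IsSplitRingHom

theorem of_field {K S : Type*} [Field K] [CommRing S] [Nontrivial S] (f : K →+* S) :
    IsSplitRingHom f := by
  let := f.toAlgebra
  obtain ⟨φ, hφ⟩ := LinearMap.exists_leftInverse_of_injective (Algebra.linearMap K S)
    (LinearMap.ker_eq_bot.2 f.injective)
  refine ⟨φ.toAddMonoidHom, ?_, fun r s => ?_⟩
  · simpa using LinearMap.congr_fun hφ 1
  · exact (congrArg φ (Algebra.smul_def r s)).symm.trans (φ.map_smul r s)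

variable {R S T : Type*} [CommSemiring R] [CommSemiring S] [CommSemiring T]

protected theorem id : IsSplitRingHom (RingHom.id R) :=
  ⟨AddMonoidHom.id R, rfl, fun _ _ => rfl⟩

theorem comp {f : R →+* S} {g : S →+* T} (hg : IsSplitRingHom g) (hf : IsSplitRingHom f) :
    IsSplitRingHom (g.comp f) := by
  obtain ⟨φ, φ_one, φ_mul⟩ := hf
  obtain ⟨ψ, ψ_one, ψ_mul⟩ := hg
  exact ⟨φ.comp ψ, by simp [ψ_one, φ_one], fun r t => by simp [ψ_mul, φ_mul]⟩

theorem comap_map_eq {f : R →+* S} (hf : IsSplitRingHom f) (J : Ideal R) :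
    (J.map f).comap f = J := by
  obtain ⟨φ, φ_one, φ_mul⟩ := hf
  refine le_antisymm (fun r hr => ?_) Ideal.le_comap_map
  have φ_mem : ∀ x ∈ J.map f, φ x ∈ J := fun x hx => by
    induction hx using Submodule.closure_induction with
    | zero => simp
    | add x y _ _ hx hy => simpa only [map_add] using J.add_mem hx hy
    | smul_mem s _ ha =>
      obtain ⟨a, ha, rfl⟩ := ha
      rw [smul_eq_mul, mul_comm, φ_mul]
      exact J.mul_mem_right _ ha
  have φ_apply : φ (f r) = r := by rw [← mul_one (f r), φ_mul, φ_one, mul_one]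
  exact φ_apply ▸ φ_mem (f r) hr

theorem mvPolynomial_map (σ : Type*) {f : R →+* S} (hf : IsSplitRingHom f) :
    IsSplitRingHom (MvPolynomial.map (σ := σ) f) := by
  classical
  obtain ⟨φ, φ_one, φ_mul⟩ := hf
  let Φ : MvPolynomial σ S →+ MvPolynomial σ R :=
    { toFun := AddMonoidAlgebra.map φ
      map_zero' := AddMonoidAlgebra.map_zero φ
      map_add' := AddMonoidAlgebra.map_add φ }
  have coeff_Φ (P : MvPolynomial σ S) (d : σ →₀ ℕ) : (Φ P).coeff d = φ (P.coeff d) := rfl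
  refine ⟨Φ, ?_, fun P Q => ?_⟩ <;> ext d
  · simp [coeff_Φ, MvPolynomial.coeff_one, apply_ite φ, φ_one]
  · simp [coeff_Φ, MvPolynomial.coeff_mul, MvPolynomial.coeff_map, φ_mul]

theorem mvPolynomial_expand (σ R : Type*) [CommSemiring R] {q : ℕ} (hq : q ≠ 0) :
    IsSplitRingHom (MvPolynomial.expand (σ := σ) (R := R) q).toRingHom := by
  classical
  have smul_injective : Function.Injective fun d : σ →₀ ℕ => q • d := nsmul_right_injective hq
  let Φ : MvPolynomial σ R →+ MvPolynomial σ R :=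
    AddMonoidAlgebra.comapDomainAddMonoidHom _ smul_injective
  have coeff_Φ (P : MvPolynomial σ R) (d : σ →₀ ℕ) : (Φ P).coeff d = P.coeff (q • d) := rfl
  refine ⟨Φ, ?_, fun P Q => ?_⟩
  · ext d
    simp [coeff_Φ, MvPolynomial.coeff_one, eq_comm, hq]
  · induction P using MvPolynomial.induction_on' with
    | add P₁ P₂ h₁ h₂ => simp only [map_add, add_mul, h₁, h₂]
    | monomial m r =>
      ext d
      have smul_le_smul : q • m ≤ q • d ↔ m ≤ d := by
        simp [Finsupp.le_def, hq, Nat.pos_iff_ne_zero]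
      have smul_tsub : q • d - q • m = q • (d - m) := by
        ext i
        simp [Nat.mul_sub]
      simp [coeff_Φ, MvPolynomial.coeff_monomial_mul', smul_le_smul, smul_tsub]

end IsSplitRingHom

/-- A commutative semiring of exponential characteristic `p` is Frobenius split (`F`-split) if its
Frobenius endomorphism splits; that is the property of a field inherited by polynomial rings. -/
def IsFrobeniusSplit (R : Type*) [CommSemiring R] (p : ℕ) [ExpChar R p] : Prop :=
  IsSplitRingHom (frobenius R p)

namespace IsFrobeniusSplit

theorem of_field (K : Type*) [Field K] (p : ℕ) [ExpChar K p] : IsFrobeniusSplit K p :=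
  IsSplitRingHom.of_field _

variable {R : Type*} [CommSemiring R] {p : ℕ} [ExpChar R p]

theorem mvPolynomial (σ : Type*) (hR : IsFrobeniusSplit R p) :
    IsFrobeniusSplit (MvPolynomial σ R) p := by
  have frobenius_eq : frobenius (MvPolynomial σ R) p =
      (MvPolynomial.map (frobenius R p)).comp (MvPolynomial.expand p).toRingHom :=
    RingHom.ext fun _ => (MvPolynomial.map_frobenius_expand p).symm
  rw [IsFrobeniusSplit, frobenius_eq]
  exact (hR.mvPolynomial_map σ).comp (.mvPolynomial_expand σ R (expChar_pos R p).ne')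

theorem isSplitRingHom_iterateFrobenius (hR : IsFrobeniusSplit R p) (e : ℕ) :
    IsSplitRingHom (iterateFrobenius R p e) := by
  induction e with
  | zero => simpa only [iterateFrobenius_zero] using .id
  | succ e ih =>
    have iterateFrobenius_eq : iterateFrobenius R p (e + 1) =
        (iterateFrobenius R p e).comp (frobenius R p) := by
      rw [iterateFrobenius_add, iterateFrobenius_one]
    exact iterateFrobenius_eq ▸ ih.comp hR

end IsFrobeniusSplit

theorem mem_of_pow_mem_frobenius_power_general {R : Type*} [CommSemiring R] {p : ℕ} [ExpChar R p]
    (hR : IsFrobeniusSplit R p) (e : ℕ) (J : Ideal R) (g : R)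
    (hg : g ^ p ^ e ∈ Ideal.span ((fun a => a ^ p ^ e) '' (J : Set R))) : g ∈ J := by
  have span_eq_map : Ideal.span ((fun a => a ^ p ^ e) '' (J : Set R)) =
      J.map (iterateFrobenius R p e) := rfl
  rwa [← (hR.isSplitRingHom_iterateFrobenius e).comap_map_eq J, Ideal.mem_comap,
    iterateFrobenius_def, ← span_eq_map]

/-- For a field `k` of prime characteristic `p`, `R = k[x_1,…,x_n]`, an ideal `J` of `R` and
`g ∈ R`: if `g^{p^e} ∈ J^{[p^e]}` then `g ∈ J`. -/
theorem mem_of_pow_mem_frobenius_power (k : Type*) [Field k] (p : ℕ) [Fact p.Prime] [CharP k p]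
    (n : ℕ) (e : ℕ) (he : 1 ≤ e) (J : Ideal (MvPolynomial (Fin n) k))
    (g : MvPolynomial (Fin n) k)
    (hg : g ^ (p ^ e) ∈
      Ideal.span ((fun a => a ^ (p ^ e)) '' (J : Set (MvPolynomial (Fin n) k)))) :
    g ∈ J :=
  mem_of_pow_mem_frobenius_power_general ((IsFrobeniusSplit.of_field k p).mvPolynomial (Fin n))
    e J g hg
end

section
/- Let k be a field of prime characteristic p, let e ≥ 1 be an integer, let f ∈ k[x], and let J be an ideal of k[x] such that f^{p^e - 1} belongs to J^{[p^e]}, the ideal generated by the p^e-th powers of all elements of J. Then both f and its formal derivative f' belong to J. -/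
open Polynomial

/-!
Write `J = (g)`, so that the hypothesis becomes `g ^ q ∣ f ^ (q - 1)`. Hence `g ∣ f`, and if
`f = g * h`, cancelling `g ^ (q - 1)` leaves `g ∣ h ^ (q - 1)`. Every prime factor of `g` therefore
divides `h`. Since differentiation lowers the multiplicity of each prime factor of `g` by at most
one, `g ∣ g' * h`, and so `g` divides `f' = g' * h + g * h'`.
-/

theorem span_image_pow_span_singleton {R : Type*} [CommSemiring R] (g : R) (n : ℕ) :
    Ideal.span ((fun a => a ^ n) '' (Ideal.span {g} : Set R)) = Ideal.span {g ^ n} := by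
  apply le_antisymm
  · rw [Ideal.span_le]
    rintro _ ⟨a, ha, rfl⟩
    exact Ideal.mem_span_singleton.2 (pow_dvd_pow_of_dvd (Ideal.mem_span_singleton.1 ha) n)
  · rw [Ideal.span_singleton_le_iff_mem]
    exact Ideal.subset_span ⟨g, Ideal.mem_span_singleton_self g, rfl⟩

section Derivation

variable {A R : Type*} [CommSemiring A] [CommRing R] [UniqueFactorizationMonoid R] [Algebra A R]
  (D : Derivation A R R)

theorem dvd_derivation_mul_of_dvd_pow {g h : R} {n : ℕ} (hgh : g ∣ h ^ n) : g ∣ D g * h := by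
  induction g using UniqueFactorizationMonoid.induction_on_prime with
  | h₁ => simp
  | h₂ u hu => exact hu.dvd
  | h₃ a P _ hP ih =>
    have ha : a ∣ D a * h := ih (dvd_of_mul_left_dvd hgh)
    have hPh : P ∣ h := hP.dvd_of_dvd_pow (dvd_of_mul_right_dvd hgh)
    have leibniz : D (P * a) * h = P * (D a * h) + h * a * D P := by
      rw [D.leibniz, smul_eq_mul, smul_eq_mul]
      ring
    rw [leibniz]
    exact dvd_add (mul_dvd_mul_left P ha) ((mul_dvd_mul_right hPh a).mul_right (D P))

theorem dvd_and_dvd_derivation_of_pow_succ_dvd_pow {f g : R} {n : ℕ}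
    (hgf : g ^ (n + 1) ∣ f ^ n) : g ∣ f ∧ g ∣ D f := by
  obtain rfl | hg := eq_or_ne g 0
  · rw [zero_pow n.succ_ne_zero, zero_dvd_iff] at hgf
    simp [eq_zero_of_pow_eq_zero hgf]
  have hdvd : g ∣ f :=
    (UniqueFactorizationMonoid.pow_dvd_pow_iff_dvd n.succ_ne_zero).1
      (hgf.trans (pow_dvd_pow f n.le_succ))
  obtain ⟨h, rfl⟩ := hdvd
  have hgh : g ∣ h ^ n := by
    rwa [mul_pow, pow_succ, mul_dvd_mul_iff_left (pow_ne_zero n hg)] at hgf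
  refine ⟨dvd_mul_right g h, ?_⟩
  rw [D.leibniz, smul_eq_mul, smul_eq_mul, mul_comm h]
  exact dvd_add (dvd_mul_right g _) (dvd_derivation_mul_of_dvd_pow D hgh)

theorem self_and_deriv_mem_general {q : ℕ} (hq : q ≠ 0) {f : R} (J : Ideal R) [J.IsPrincipal]
    (hf : f ^ (q - 1) ∈ Ideal.span ((fun a => a ^ q) '' (J : Set R))) :
    f ∈ J ∧ D f ∈ J := by
  obtain ⟨n, rfl⟩ := Nat.exists_eq_succ_of_ne_zero hq
  obtain ⟨g, rfl⟩ : ∃ g, J = Ideal.span {g} := Submodule.IsPrincipal.principal J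
  rw [span_image_pow_span_singleton] at hf
  simp only [Ideal.mem_span_singleton] at hf ⊢
  exact dvd_and_dvd_derivation_of_pow_succ_dvd_pow D hf

end Derivation

/-- For a field `k` of prime characteristic `p`, `e ≥ 1`, `f ∈ k[x]` and an ideal `J` with
`f^{p^e-1} ∈ J^{[p^e]}`, both `f` and `f'` belong to `J`. -/
theorem self_and_deriv_mem (k : Type*) [Field k] (p : ℕ) [Fact p.Prime] [CharP k p]
    (e : ℕ) (he : 1 ≤ e) (f : Polynomial k) (J : Ideal (Polynomial k))
    (hf : f ^ (p ^ e - 1) ∈ Ideal.span ((fun a => a ^ (p ^ e)) '' (J : Set (Polynomial k)))) :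
    f ∈ J ∧ derivative f ∈ J := by
  exact self_and_deriv_mem_general derivative' (pow_ne_zero e (Fact.out : p.Prime).ne_zero) J hf
end
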